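/- arXiv:2401.02598 — 6 statements merged into one kernel-verified Lean document; each statement's English description precedes it below -/
import Mathlib

section
/- Let (X,d) be a metric space with base point x₀ and let A, B ⊆ X. Then the following are equivalent: (1) there exist C > 0 and r₀ > 0 such that for every x ∈ X with |x| ≥ r₀ and every a ∈ A, b ∈ B one has max{d(x,a), d(x,b)} ≥ C|x|; (2) there exist D > 0 and r₁ > 0 such that for every r ≥ r₁ and every a ∈ A, b ∈ B with |a| ≥ r and |b| ≥ r one has d(a,b) ≥ D·r. -/
/-!
Both directions are triangle inequalities. For (1) ⇒ (2), apply (1) at the point `x = a`, where the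
maximum is `d(a, b)`; the same constants work. For (2) ⇒ (1), take `C = min (1/2) (D/4)` and
`r₀ = 2 r₁`. If `a` and `b` were both closer to `x` than `C|x|`, then `|a|, |b| ≥ |x|/2` since
`C ≤ 1/2`, so (2) with `r = |x|/2` gives `d(a, b) ≥ D|x|/2 ≥ 2C|x|`, contradicting
`d(a, b) ≤ d(x, a) + d(x, b) < 2C|x|`.
-/

/-- For subsets `A, B` of a pointed metric space `(X, d, x₀)`,
the pair `{A, B}` diverges as a linear function (condition (1)) iff the parts of
`A` and `B` outside large balls around `x₀` are far apart (condition (2)). -/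
theorem sublinear_divergence_equiv {X : Type*} [MetricSpace X] (x₀ : X) (A B : Set X) :
    (∃ C > (0 : ℝ), ∃ r₀ > (0 : ℝ), ∀ x : X, r₀ ≤ dist x x₀ →
      ∀ a ∈ A, ∀ b ∈ B, C * dist x x₀ ≤ max (dist x a) (dist x b)) ↔
    (∃ D > (0 : ℝ), ∃ r₁ > (0 : ℝ), ∀ r : ℝ, r₁ ≤ r →
      ∀ a ∈ A, ∀ b ∈ B, r ≤ dist a x₀ → r ≤ dist b x₀ → D * r ≤ dist a b) := by
  constructor
  · rintro ⟨C, hC, r₀, hr₀, h⟩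
    refine ⟨C, hC, r₀, hr₀, fun r hr a ha b hb hra _ => ?_⟩
    have h1 := h a (hr.trans hra) a ha b hb
    rw [dist_self, max_eq_right dist_nonneg] at h1
    exact (mul_le_mul_of_nonneg_left hra hC.le).trans h1
  · rintro ⟨D, hD, r₁, hr₁, h⟩
    refine ⟨min (1 / 2) (D / 4), by positivity, 2 * r₁, by positivity,
      fun x hx a ha b hb => ?_⟩
    by_contra! hlt
    obtain ⟨hxa, hxb⟩ := max_lt_iff.mp hlt
    have hC₁ : min (1 / 2) (D / 4) * dist x x₀ ≤ 1 / 2 * dist x x₀ :=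
      mul_le_mul_of_nonneg_right (min_le_left _ _) dist_nonneg
    have hC₂ : min (1 / 2) (D / 4) * dist x x₀ ≤ D / 4 * dist x x₀ :=
      mul_le_mul_of_nonneg_right (min_le_right _ _) dist_nonneg
    have hab := h (dist x x₀ / 2) (by linarith) a ha b hb
      (by linarith [dist_triangle x a x₀]) (by linarith [dist_triangle x b x₀])
    linarith [dist_triangle_left a b x]
end

section
/- Let (X,d) be a metric space with base point x₀ and let A, B ⊆ X. Suppose there exist α with 0 < α < 1/5 and r₀ > 0 such that for every x ∈ X with |x| ≥ r₀ and every a ∈ A, b ∈ B one has max{d(x,a), d(x,b)} ≥ 4α|x|. Define St(A) = ⋃{N(z, α|z|) : z ∈ X, N(z, α|z|) ∩ A ≠ ∅} and St(B) = ⋃{N(z, α|z|) : z ∈ X, N(z, α|z|) ∩ B ≠ ∅}. Then for every x ∈ X with |x| ≥ r₀ and every u ∈ St(A), v ∈ St(B) one has max{d(x,u), d(x,v)} ≥ α|x|. -/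
/-!
If `u ∈ St(A)` and `v ∈ St(B)` were both within `α|x|` of `x`, then points `a ∈ A` and `b ∈ B`
in the balls witnessing membership would both be within `4α|x|` of `x`
(`dist_lt_of_near_star`), contradicting the divergence of `A` and `B`.
-/

/-- If `u` is within `α|x|` of `x` and shares a ball `N(z, α|z|)` with `a`, then
`(1 - α)|z| < (1 + α)|x|`, so `|z| < (3/2)|x|` because `α < 1/5`; going from `x` to `a`
through `u` and `z` costs less than `α|x| + 2α|z| < 4α|x|`. -/
lemma dist_lt_of_near_star {X : Type*} [MetricSpace X] {x₀ x u z a : X} {α : ℝ}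
    (hα0 : 0 < α) (hα : α < 1 / 5)
    (hxu : dist x u < α * dist x x₀)
    (hu : u ∈ Metric.closedBall z (α * dist z x₀))
    (ha : a ∈ Metric.closedBall z (α * dist z x₀)) :
    dist x a < 4 * α * dist x x₀ := by
  rw [Metric.mem_closedBall] at hu ha
  have hzx : dist z x₀ ≤ dist u z + dist x u + dist x x₀ := by
    have h := dist_triangle4 z u x x₀
    rwa [dist_comm z u, dist_comm u x] at h
  have hxa : dist x a ≤ dist x u + dist u z + dist a z := by
    have h := dist_triangle4 x u z a
    rwa [dist_comm z a] at h
  have hz : dist z x₀ < 3 / 2 * dist x x₀ := by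
    nlinarith [dist_nonneg (x := z) (y := x₀), dist_nonneg (x := x) (y := x₀)]
  nlinarith [mul_lt_mul_of_pos_left hz hα0]

/-- If `{A, B}` diverges linearly with constant `4α` (`0 < α < 1/5`),
then the stars `St(A)`, `St(B)` with respect to the cover by closed balls
`N(z, α|z|)` diverge linearly with constant `α`. -/
theorem star_divergence {X : Type*} [MetricSpace X] (x₀ : X) (A B : Set X)
    (α : ℝ) (hα0 : 0 < α) (hα : α < 1 / 5) (r₀ : ℝ) (hr₀ : 0 < r₀)
    (hdiv : ∀ x : X, r₀ ≤ dist x x₀ →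
      ∀ a ∈ A, ∀ b ∈ B, 4 * α * dist x x₀ ≤ max (dist x a) (dist x b)) :
    ∀ x : X, r₀ ≤ dist x x₀ →
      ∀ u ∈ {u : X | ∃ z : X, (Metric.closedBall z (α * dist z x₀) ∩ A).Nonempty ∧
        u ∈ Metric.closedBall z (α * dist z x₀)},
      ∀ v ∈ {v : X | ∃ z : X, (Metric.closedBall z (α * dist z x₀) ∩ B).Nonempty ∧
        v ∈ Metric.closedBall z (α * dist z x₀)},
      α * dist x x₀ ≤ max (dist x u) (dist x v) := by
  rintro x hx u ⟨z, ⟨a, haz, haA⟩, hu⟩ v ⟨w, ⟨b, hbw, hbB⟩, hv⟩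
  by_contra! h
  obtain ⟨hxu, hxv⟩ := max_lt_iff.mp h
  exact (hdiv x hx a haA b hbB).not_gt
    (max_lt (dist_lt_of_near_star hα0 hα hxu hu haz) (dist_lt_of_near_star hα0 hα hxv hv hbw))
end

section
/- Let 0 < c < 1/2, define aₙ = 1/(1−2c)^{n−1} for n ≥ 1, and for each n let fₙ : ℝ → [0,1] be the map with fₙ(t) = 0 for t ≤ aₙ, fₙ(t) = (t − aₙ)/(aₙ₊₁ − aₙ) for aₙ ≤ t ≤ aₙ₊₁, and fₙ(t) = 1 for t ≥ aₙ₊₁. Let s : (0,∞) → (0,∞) be asymptotically sublinear and let ε > 0. Then there exists r₀ > 0 such that for every n ≥ 1, every t with aₙ ≤ t ≤ aₙ₊₁ and t ≥ r₀, and all real numbers t₁, t₂ with |t₁ − t| < s(t) and |t₂ − t| < s(t), one has |fₙ(t₁) − fₙ(t₂)| < ε. -/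
/-!
With `L = aₙ₊₁ - aₙ`, the map `fₙ` is the clamp of `t` to `[aₙ, aₙ₊₁]` followed by
`x ↦ (x - aₙ) / L`, hence `1 / L`-Lipschitz (`bump_lipschitz`). The geometric growth of `aₙ`
gives `L = 2c aₙ₊₁ ≥ 2c t` for `t ≤ aₙ₊₁`, so on the ball `B(t, s(t))` the values of `fₙ` differ
by less than `2 s(t) / L ≤ s(t) / (c t)`, which is less than `ε` as soon as `s(t) < c ε t`.
-/

/-- A function that is `0` left of `p`, `1` right of `q` and linear in between is
`1 / (q - p)`-Lipschitz. -/
lemma bump_lipschitz {p q : ℝ} (hpq : p < q) {g : ℝ → ℝ}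
    (h0 : ∀ t, t ≤ p → g t = 0)
    (hmid : ∀ t, p ≤ t → t ≤ q → g t = (t - p) / (q - p))
    (h1 : ∀ t, q ≤ t → g t = 1) (x y : ℝ) :
    |g x - g y| ≤ |x - y| / (q - p) := by
  have hL : 0 < q - p := sub_pos.2 hpq
  have hg : ∀ t, g t = (max (min t q) p - p) / (q - p) := by
    intro t
    rcases le_total t p with h | h
    · rw [h0 t h, min_eq_left (h.trans hpq.le), max_eq_right h, sub_self, zero_div]
    · rcases le_total t q with h' | h'
      · rw [hmid t h h', min_eq_left h', max_eq_left h]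
      · rw [h1 t h', min_eq_right h', max_eq_left hpq.le, div_self hL.ne']
  rw [hg x, hg y, ← sub_div, abs_div, abs_of_pos hL, sub_sub_sub_cancel_right]
  refine div_le_div_of_nonneg_right ?_ hL.le
  refine (abs_max_sub_max_le_abs (min x q) (min y q) p).trans ?_
  simpa using abs_min_sub_min_le_max x q y q

/-- Let `0 < c < 1/2`, `aₙ = 1/(1−2c)^(n−1)` for `n ≥ 1`, and let
`fₙ` be the piecewise linear map which is `0` on `(-∞, aₙ]`, linear on
`[aₙ, aₙ₊₁]` and `1` on `[aₙ₊₁, ∞)`.  If `s` is asymptotically sublinear (and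
positive on `(0, ∞)`) and `ε > 0`, then there is `r₀ > 0` such that for all
`n ≥ 1`, all `t ∈ [aₙ, aₙ₊₁]` with `t ≥ r₀` and all `t₁, t₂` with
`|t₁ − t| < s(t)` and `|t₂ − t| < s(t)`, one has `|fₙ(t₁) − fₙ(t₂)| < ε`. -/
theorem bump_diameter_estimate (c : ℝ) (hc0 : 0 < c) (hc : c < 1 / 2)
    (a : ℕ → ℝ) (ha : ∀ n : ℕ, 1 ≤ n → a n = 1 / (1 - 2 * c) ^ (n - 1))
    (f : ℕ → ℝ → ℝ)
    (hf0 : ∀ n : ℕ, 1 ≤ n → ∀ t : ℝ, t ≤ a n → f n t = 0)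
    (hfmid : ∀ n : ℕ, 1 ≤ n → ∀ t : ℝ, a n ≤ t → t ≤ a (n + 1) →
      f n t = (t - a n) / (a (n + 1) - a n))
    (hf1 : ∀ n : ℕ, 1 ≤ n → ∀ t : ℝ, a (n + 1) ≤ t → f n t = 1)
    (s : ℝ → ℝ) (hspos : ∀ t : ℝ, 0 < t → 0 < s t)
    (hs : ∀ α > (0 : ℝ), ∃ t₀ > (0 : ℝ), ∀ t > t₀, s t < α * t)
    (ε : ℝ) (hε : 0 < ε) :
    ∃ r₀ > (0 : ℝ), ∀ n : ℕ, 1 ≤ n → ∀ t : ℝ, a n ≤ t → t ≤ a (n + 1) → r₀ ≤ t →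
      ∀ t₁ t₂ : ℝ, |t₁ - t| < s t → |t₂ - t| < s t → |f n t₁ - f n t₂| < ε := by
  obtain ⟨t₀, ht₀, hst⟩ := hs (c * ε) (mul_pos hc0 hε)
  refine ⟨t₀ + 1, by linarith, ?_⟩
  intro n hn t _ htn1 hr t₁ t₂ h₁ h₂
  have ht : 0 < t := by linarith
  have hstt := hst t (by linarith)
  have hb : 0 < 1 - 2 * c := by linarith
  have hgap : a (n + 1) - a n = 2 * c * a (n + 1) := by
    obtain ⟨m, rfl⟩ : ∃ m, n = m + 1 := ⟨n - 1, by omega⟩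
    rw [ha _ hn, ha _ (by omega)]
    simp only [Nat.add_sub_cancel]
    field_simp
    ring
  have hpos : 0 < a (n + 1) - a n := by
    rw [hgap]
    have : 0 < a (n + 1) := ht.trans_le htn1
    positivity
  refine (bump_lipschitz (by linarith) (hf0 n hn) (hfmid n hn) (hf1 n hn) t₁ t₂).trans_lt ?_
  rw [div_lt_iff₀ hpos, hgap]
  have htri : |t₁ - t₂| < 2 * s t := by
    rw [abs_lt] at h₁ h₂ ⊢
    constructor <;> linarith [h₁.1, h₁.2, h₂.1, h₂.2]
  have hmul : c * ε * t ≤ c * ε * a (n + 1) := by gcongr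
  linarith
end

section
/- Let (X,d) be a metric space with base point x₀, let 0 < c < 1/2 and define aₙ = 1/(1−2c)^{n−1} for n ≥ 1 and Kₙ = {x ∈ X : aₙ ≤ |x| ≤ aₙ₊₁}. Then for every n ≥ 2, every x ∈ Kₙ, every y ∈ Kₙ₋₁ and every z ∈ Kₙ₊₁, one has max{d(x,y), d(x,z)} ≥ c|x|. -/
/-!
The triangle inequality gives `d(x,y) ≥ |x| - aₙ` and `d(x,z) ≥ aₙ₊₁ - |x|`, so
`d(x,y) + d(x,z) ≥ aₙ₊₁ - aₙ = 2c·aₙ₊₁ ≥ 2c|x|`, and the larger of the two distances is at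
least half of this sum.
-/

/-- For `0 < c < 1/2`, `aₙ = 1/(1−2c)^(n−1)` and the annuli
`Kₙ = {x : aₙ ≤ |x| ≤ aₙ₊₁}` around the base point `x₀`, for every `n ≥ 2`,
`x ∈ Kₙ`, `y ∈ Kₙ₋₁`, `z ∈ Kₙ₊₁` one has `max{d(x,y), d(x,z)} ≥ c|x|`. -/
theorem annuli_divergence {X : Type*} [MetricSpace X] (x₀ : X)
    (c : ℝ) (hc0 : 0 < c) (hc : c < 1 / 2)
    (a : ℕ → ℝ) (ha : ∀ n : ℕ, 1 ≤ n → a n = 1 / (1 - 2 * c) ^ (n - 1))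
    (K : ℕ → Set X) (hK : ∀ n : ℕ, K n = {x : X | a n ≤ dist x x₀ ∧ dist x x₀ ≤ a (n + 1)}) :
    ∀ n : ℕ, 2 ≤ n → ∀ x ∈ K n, ∀ y ∈ K (n - 1), ∀ z ∈ K (n + 1),
      c * dist x x₀ ≤ max (dist x y) (dist x z) := by
  intro n hn x hx y hy z hz
  obtain ⟨m, rfl⟩ : ∃ m, n = m + 1 := ⟨n - 1, by omega⟩
  simp only [hK, Set.mem_setOf_eq, Nat.add_sub_cancel] at hx hy hz
  have hq : 0 < 1 - 2 * c := by linarith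
  have hstep : a (m + 1) = (1 - 2 * c) * a (m + 1 + 1) := by
    rw [ha (m + 1) (by omega), ha (m + 1 + 1) (by omega)]
    simp only [Nat.add_sub_cancel]
    field_simp
    ring
  have hxy : dist x x₀ ≤ dist x y + dist y x₀ := dist_triangle x y x₀
  have hzx : dist z x₀ ≤ dist x z + dist x x₀ := by
    simpa only [dist_comm z x] using dist_triangle z x x₀
  have hcx : c * dist x x₀ ≤ c * a (m + 1 + 1) := mul_le_mul_of_nonneg_left hx.2 hc0.le
  have hleft := le_max_left (dist x y) (dist x z)
  have hright := le_max_right (dist x y) (dist x z)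
  linarith [hy.2, hz.1]
end

section
/- Let n ≥ 1 and α > 0, and let θ₁, …, θ_k be unit vectors in ℝⁿ such that the open balls B(θ₁, α), …, B(θ_k, α) cover the unit sphere S^{n−1}. Then there exists η > 0 such that for every x ∈ ℝⁿ with ‖x‖ ≥ 1 there is an index l with B(x, η‖x‖) ⊆ C_{θ_l}^α, where C_{θ_l}^α = ⋃_{r≥1} B(rθ_l, αr). -/
/-!
The sphere is compact, so the cover by the balls `B(θ_l, α)` has a Lebesgue number `δ > 0`, and
`η = δ` works: with `r = ‖x‖ ≥ 1`, the ball `B(x / r, δ)` lies in some `B(θ_l, α)`, and scaling by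
`r` gives `B(x, δ r) ⊆ B(r θ_l, α r)`, one of the balls forming the cone.
-/

/-- If the open balls `B(θ₁, α), …, B(θ_k, α)` around unit
vectors cover the unit sphere `S^{n−1}`, then there is `η > 0` such that every
`x` with `‖x‖ ≥ 1` satisfies `B(x, η‖x‖) ⊆ C_{θ_l}^α` for some `l`, where
`C_{θ_l}^α = ⋃_{r ≥ 1} B(rθ_l, αr)`.  (The Lebesgue function of the cover by
the cones is at least linear.) -/
theorem cone_cover_lebesgue (n : ℕ) (hn : 1 ≤ n) (α : ℝ) (hα : 0 < α)
    (k : ℕ) (θ : Fin k → EuclideanSpace ℝ (Fin n)) (hθ : ∀ l, ‖θ l‖ = 1)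
    (hcov : Metric.sphere (0 : EuclideanSpace ℝ (Fin n)) 1 ⊆
      ⋃ l : Fin k, Metric.ball (θ l) α) :
    ∃ η > (0 : ℝ), ∀ x : EuclideanSpace ℝ (Fin n), 1 ≤ ‖x‖ →
      ∃ l : Fin k, Metric.ball x (η * ‖x‖) ⊆
        ⋃ r ∈ Set.Ici (1 : ℝ), Metric.ball (r • θ l) (α * r) := by
  obtain ⟨δ, hδ, H⟩ := lebesgue_number_lemma_of_metric
    (isCompact_sphere (0 : EuclideanSpace ℝ (Fin n)) 1) (fun _ => Metric.isOpen_ball) hcov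
  refine ⟨δ, hδ, fun x hx => ?_⟩
  have hr : 0 < ‖x‖ := by linarith
  obtain ⟨l, hl⟩ := H (‖x‖⁻¹ • x) (by
    rw [mem_sphere_zero_iff_norm, norm_smul, norm_inv, norm_norm, inv_mul_cancel₀ hr.ne'])
  refine ⟨l, fun y hy => Set.mem_iUnion₂.2 ⟨‖x‖, hx, ?_⟩⟩
  have hscaled : ‖x‖⁻¹ • y ∈ Metric.ball (‖x‖⁻¹ • x) δ := by
    rw [Metric.mem_ball, dist_smul₀, norm_inv, norm_norm, inv_mul_lt_iff₀ hr, mul_comm]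
    exact hy
  have hmem := hl hscaled
  rw [Metric.mem_ball] at hmem ⊢
  calc dist y (‖x‖ • θ l) = dist (‖x‖ • ‖x‖⁻¹ • y) (‖x‖ • θ l) := by
        rw [smul_inv_smul₀ hr.ne']
    _ = ‖x‖ * dist (‖x‖⁻¹ • y) (θ l) := by rw [dist_smul₀, norm_norm]
    _ < ‖x‖ * α := mul_lt_mul_of_pos_left hmem hr
    _ = α * ‖x‖ := mul_comm _ _
end

section
/- Let n ≥ 1, let θ₁, θ₂ ∈ ℝⁿ be unit vectors, let 0 < α < 1, and suppose the closed balls N(θ₁, α) and N(θ₂, α) are disjoint. Then there exists δ > 0 such that for all a ∈ ⋃_{r≥1} N(rθ₁, αr) and all b ∈ ⋃_{r≥1} N(rθ₂, αr), one has d(a,b) ≥ δ·min{‖a‖, ‖b‖}. In particular the pair of closed cones diverges as a linear function. -/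
/-!
The heart of the matter is the inequality `‖r θ₁ - s θ₂‖ ≥ (r + s) / 2 * ‖θ₁ - θ₂‖` for unit vectors
and `r, s ≥ 0` (`half_add_mul_norm_sub_le`). Disjointness of the balls gives `‖θ₁ - θ₂‖ > 2 α`,
since otherwise the midpoint of `θ₁, θ₂` lies in both. If `a` is within `α r` of `r θ₁` and `b` is
within `α s` of `s θ₂`, the triangle inequality gives
`dist a b ≥ (‖θ₁ - θ₂‖ / 2 - α) (r + s)`, while `‖a‖ ≤ (1 + α) r ≤ 2 (r + s)`.
-/

/-- Squared, the difference of the two sides is `(r - s)² (1 - ‖x - y‖² / 4)`, which is nonnegative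
because `‖x - y‖ ≤ 2`. -/
lemma half_add_mul_norm_sub_le {E : Type*} [NormedAddCommGroup E] [InnerProductSpace ℝ E]
    {x y : E} (hx : ‖x‖ = 1) (hy : ‖y‖ = 1) {r s : ℝ} (hr : 0 ≤ r) (hs : 0 ≤ s) :
    (r + s) / 2 * ‖x - y‖ ≤ ‖r • x - s • y‖ := by
  have hxy : ‖x - y‖ ^ 2 = 2 - 2 * inner ℝ x y := by
    rw [norm_sub_sq_real, hx, hy]; ring
  have hrs : ‖r • x - s • y‖ ^ 2 = r ^ 2 + s ^ 2 - 2 * (r * s) * inner ℝ x y := by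
    rw [norm_sub_sq_real, norm_smul, norm_smul, hx, hy, real_inner_smul_left,
      real_inner_smul_right, Real.norm_of_nonneg hr, Real.norm_of_nonneg hs]
    ring
  have hin : -1 ≤ inner ℝ x y := by
    have := neg_le_of_abs_le (abs_real_inner_le_norm x y)
    rwa [hx, hy, one_mul] at this
  refine (pow_le_pow_iff_left₀ (by positivity) (norm_nonneg _) two_ne_zero).mp ?_
  rw [mul_pow, hxy, hrs]
  nlinarith [mul_nonneg (sq_nonneg (r - s)) (by linarith : 0 ≤ 1 + inner ℝ x y)]

lemma two_mul_lt_norm_sub_of_disjoint {E : Type*} [NormedAddCommGroup E] [NormedSpace ℝ E]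
    {x y : E} {α : ℝ} (h : Disjoint (Metric.closedBall x α) (Metric.closedBall y α)) :
    2 * α < ‖x - y‖ := by
  by_contra! hle
  refine h.notMem_of_mem_left (a := midpoint ℝ x y) ?_ ?_
  · rw [Metric.mem_closedBall, dist_midpoint_left, Real.norm_ofNat, dist_eq_norm]
    linarith
  · rw [Metric.mem_closedBall, dist_midpoint_right, Real.norm_ofNat, dist_eq_norm]
    linarith


/-- If the closed balls `N(θ₁, α)` and `N(θ₂, α)` around unit
vectors `θ₁, θ₂` are disjoint (`0 < α < 1`), then there is `δ > 0` such that
any points `a`, `b` of the two closed cones `⋃_{r ≥ 1} N(rθᵢ, αr)` satisfy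
`d(a, b) ≥ δ · min{‖a‖, ‖b‖}`; in particular the pair of closed cones diverges
as a linear function. -/
theorem disjoint_cones_diverge (n : ℕ) (hn : 1 ≤ n)
    (θ₁ θ₂ : EuclideanSpace ℝ (Fin n)) (hθ₁ : ‖θ₁‖ = 1) (hθ₂ : ‖θ₂‖ = 1)
    (α : ℝ) (hα0 : 0 < α) (hα : α < 1)
    (hdisj : Disjoint (Metric.closedBall θ₁ α) (Metric.closedBall θ₂ α)) :
    ∃ δ > (0 : ℝ),
      ∀ a ∈ ⋃ r ∈ Set.Ici (1 : ℝ), Metric.closedBall (r • θ₁) (α * r),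
      ∀ b ∈ ⋃ r ∈ Set.Ici (1 : ℝ), Metric.closedBall (r • θ₂) (α * r),
        δ * min ‖a‖ ‖b‖ ≤ dist a b := by
  have hD := two_mul_lt_norm_sub_of_disjoint hdisj
  refine ⟨(‖θ₁ - θ₂‖ / 2 - α) / 2, by linarith, fun a ha b hb => ?_⟩
  simp only [Set.mem_iUnion, Set.mem_Ici, exists_prop, Metric.mem_closedBall] at ha hb
  obtain ⟨r, hr, ha⟩ := ha
  obtain ⟨s, hs, hb⟩ := hb
  have hkey := half_add_mul_norm_sub_le hθ₁ hθ₂ (by linarith : 0 ≤ r) (by linarith : 0 ≤ s)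
  have htri : ‖r • θ₁ - s • θ₂‖ ≤ dist a (r • θ₁) + dist a b + dist b (s • θ₂) := by
    rw [← dist_eq_norm, dist_comm a (r • θ₁)]
    exact dist_triangle4 _ _ _ _
  have hnorm : ‖a‖ ≤ 2 * (r + s) := by
    have h₁ : ‖a‖ ≤ ‖r • θ₁‖ + dist a (r • θ₁) := by
      rw [dist_eq_norm]; exact norm_le_norm_add_norm_sub' a _
    rw [norm_smul, hθ₁, Real.norm_of_nonneg (by linarith : 0 ≤ r)] at h₁
    nlinarith
  calc (‖θ₁ - θ₂‖ / 2 - α) / 2 * min ‖a‖ ‖b‖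
      ≤ (‖θ₁ - θ₂‖ / 2 - α) / 2 * (2 * (r + s)) :=
        mul_le_mul_of_nonneg_left ((min_le_left _ _).trans hnorm) (by linarith)
    _ ≤ dist a b := by linarith
end
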